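/- Let d ≥ 2 be an integer and 0 < t < d/(d−1). Then the box dimensions of G_{t,d} and F_{t,d} exist and dim_B G_{t,d} = dim_B F_{t,d} = d²/(d + t). -/

import Mathlib

/-!
Write `s = d² / (d + t)` and, for a scale `δ`, let `X = δ ^ (-d / (d + t))`, so that
`X ^ d = δ ^ (-s)` and `X ^ (d + t) * δ ^ d = 1`. Since `Gset t d ⊆ Fset t d`, it suffices to cover
`Fset` efficiently and to show that `Gset` has no much smaller cover.

Upper bound (`exists_cover_Fset`): the `O(X ^ d)` points with denominator at most `X` get one cube
each. The rest of the set lies in `[0, 1] ^ (d - 1) × [0, X ^ (-t)]`, which a grid of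
`O(δ ^ (-d) * X ^ (-t)) = O(X ^ d)` cubes covers. The hypothesis `t < d / (d - 1)` says that the
slab is at least as thick as one cube.

Lower bound (`sq_sum_le_of_cover`): consider the points of the graph whose denominator is a prime
`q ≤ X`, and count pairs of points that are `δ`-close in every coordinate. For denominators
`q ≠ q'` the heights are `δ`-close only if `|q - q'| ≤ δ * X ^ (t + 1) / t`. For such `q, q'`
the integers `p i * q' - p' i * q` are nonzero, at most `δ * X ^ 2` in absolute value, and determine
`p` and `p'`; this leaves at most `(2 * δ * X ^ 2) ^ (d - 1)` pairs (`card_close_le`). For equal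
denominators there are only trivial pairs, because `δ * X < 1`. Altogether there are `O(X ^ d)`
close pairs. Chebyshev's bound on the number of primes gives at least `(X / (16 * log X)) ^ d`
points, and Cauchy–Schwarz turns the two counts into a lower bound `X ^ d / (log X) ^ O(1)` for the
size of any cover.

Both bounds give `log N = s * (-log δ) + O(log (-log δ))`, hence the limit.
-/

open Set MeasureTheory Filter

noncomputable section

/-- Minimal number of closed axis-parallel cubes of side length `δ` needed to cover `S`. -/
def cubeCoverNum (n : ℕ) (δ : ℝ) (S : Set (EuclideanSpace ℝ (Fin n))) : ℕ :=
  sInf {m : ℕ | ∃ c : Fin m → (Fin n → ℝ),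
    S ⊆ ⋃ i, {z : EuclideanSpace ℝ (Fin n) | ∀ j, z j ∈ Set.Icc (c i j) (c i j + δ)}}

-- The popcorn pyramid function `f_{t,d}` on `[0,1]^{d-1}`.
open Classical in
def popcornFun (t : ℝ) (d : ℕ) (x : Fin (d-1) → ℝ) : ℝ :=
  if h : ∃ q : ℕ, ∃ p : Fin (d-1) → ℕ,
      (∀ i, 1 ≤ p i ∧ p i < q ∧ Nat.Coprime (p i) q) ∧ (∀ i, x i = (p i : ℝ) / (q : ℝ))
  then (h.choose : ℝ) ^ (-t)
  else 0

/-- The graph `G_{t,d}` of the popcorn pyramid function, as a subset of `ℝ^d`. -/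
def Gset (t : ℝ) (d : ℕ) : Set (EuclideanSpace ℝ (Fin d)) :=
  {z | ∃ x : Fin (d-1) → ℝ, (∀ i, x i ∈ Set.Icc (0:ℝ) 1) ∧
    (∀ i : Fin (d-1), z (Fin.castLE (Nat.sub_le d 1) i) = x i) ∧
    (∀ j : Fin d, (j : ℕ) = d - 1 → z j = popcornFun t d x)}

/-- The set `F_{t,d} ⊆ ℝ^d`. -/
def Fset (t : ℝ) (d : ℕ) : Set (EuclideanSpace ℝ (Fin d)) :=
  {z | ∃ q : ℕ, ∃ p : Fin (d-1) → ℕ, (∀ i, 1 ≤ p i ∧ p i < q) ∧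
      (∀ i : Fin (d-1), z (Fin.castLE (Nat.sub_le d 1) i) = (p i : ℝ) / (q : ℝ)) ∧
      (∀ j : Fin d, (j : ℕ) = d - 1 → z j = (q : ℝ) ^ (-t))} ∪
  {z | (∀ i : Fin (d-1), z (Fin.castLE (Nat.sub_le d 1) i) ∈ Set.Icc (0:ℝ) 1) ∧
    (∀ j : Fin d, (j : ℕ) = d - 1 → z j = 0)}

/-- Upper box dimension, via covering numbers by closed cubes. -/
def upperBoxDim (n : ℕ) (S : Set (EuclideanSpace ℝ (Fin n))) : ℝ :=
  limsup (fun δ : ℝ => Real.log (cubeCoverNum n δ S) / (-Real.log δ)) (nhdsWithin 0 (Set.Ioi 0))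

/-- Lower box dimension, via covering numbers by closed cubes. -/
def lowerBoxDim (n : ℕ) (S : Set (EuclideanSpace ℝ (Fin n))) : ℝ :=
  liminf (fun δ : ℝ => Real.log (cubeCoverNum n δ S) / (-Real.log δ)) (nhdsWithin 0 (Set.Ioi 0))

/-- Assouad dimension. -/
def assouadDim (n : ℕ) (S : Set (EuclideanSpace ℝ (Fin n))) : ℝ :=
  sInf {α : ℝ | ∃ C : ℝ, 0 < C ∧ ∀ x ∈ S, ∀ r R : ℝ, 0 < r → r < R →
    (cubeCoverNum n r (Metric.closedBall x R ∩ S) : ℝ) ≤ C * (R / r) ^ α}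

/-- Upper θ-intermediate dimension (with the convention that `θ = 0` gives Hausdorff dimension).
Covers are finite, which is no loss of generality since all covering sets have diameter
bounded below by `δ^(1/θ) > 0`. -/
def upperIntDim (n : ℕ) (θ : ℝ) (S : Set (EuclideanSpace ℝ (Fin n))) : ℝ :=
  if θ = 0 then (dimH S).toReal else
  sInf {s : ℝ | 0 ≤ s ∧ ∀ ε : ℝ, 0 < ε → ∃ δ₀ : ℝ, 0 < δ₀ ∧ δ₀ ≤ 1 ∧
    ∀ δ : ℝ, 0 < δ → δ < δ₀ →
    ∃ (m : ℕ) (U : Fin m → Set (EuclideanSpace ℝ (Fin n))),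
      S ⊆ (⋃ i, U i) ∧ (∀ i, δ ^ (1/θ) ≤ Metric.diam (U i) ∧ Metric.diam (U i) ≤ δ) ∧
      (∑ i, Metric.diam (U i) ^ s) ≤ ε}

/-- Lower θ-intermediate dimension (with the convention that `θ = 0` gives Hausdorff dimension). -/
def lowerIntDim (n : ℕ) (θ : ℝ) (S : Set (EuclideanSpace ℝ (Fin n))) : ℝ :=
  if θ = 0 then (dimH S).toReal else
  sInf {s : ℝ | 0 ≤ s ∧ ∀ ε : ℝ, 0 < ε → ∀ δ₀ : ℝ, 0 < δ₀ → δ₀ ≤ 1 →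
    ∃ δ : ℝ, 0 < δ ∧ δ < δ₀ ∧
    ∃ (m : ℕ) (U : Fin m → Set (EuclideanSpace ℝ (Fin n))),
      S ⊆ (⋃ i, U i) ∧ (∀ i, δ ^ (1/θ) ≤ Metric.diam (U i) ∧ Metric.diam (U i) ≤ δ) ∧
      (∑ i, Metric.diam (U i) ^ s) ≤ ε}

/-- `l_t(k,δ) = ⌊(1/(kδ))^(1/t)⌋`. -/
def lfun (t δ : ℝ) (k : ℕ) : ℕ := Nat.floor ((1/((k:ℝ)*δ)) ^ (1/t))

/-- The Duffin–Schaeffer sets `E^{(d-1)}(δ,n) ⊆ ℝ^{d-1}`. -/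
def Eset (d : ℕ) (δ : ℝ) (n : ℕ) : Set (EuclideanSpace ℝ (Fin (d-1))) :=
  {z | ∃ m : Fin (d-1) → ℕ, (∀ i, 1 ≤ m i ∧ m i < n ∧ Nat.Coprime (m i) n) ∧
    ∀ i, z i ∈ Set.Ioo ((m i : ℝ)/(n:ℝ) - δ) ((m i : ℝ)/(n:ℝ) + δ)}

/-- The horizontal-layer input sets `L_{t,d}(δ,k) ⊆ [0,1]^{d-1}`. -/
def Lset (t : ℝ) (d : ℕ) (δ : ℝ) (k : ℕ) : Set (EuclideanSpace ℝ (Fin (d-1))) :=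
  {z | ∃ n : ℕ, lfun t δ (k+1) < n ∧ n ≤ lfun t δ k ∧
    ∃ m : Fin (d-1) → ℕ, (∀ i, 1 ≤ m i ∧ m i < n ∧ Nat.Coprime (m i) n) ∧
    ∀ i, z i = (m i : ℝ)/(n:ℝ)}

end

/-! ### Covers by cubes -/

/-- The union of the cubes of side length `δ` with lower corners `c i`. -/
def cubes {ι : Type*} {n : ℕ} (δ : ℝ) (c : ι → Fin n → ℝ) : Set (EuclideanSpace ℝ (Fin n)) :=
  ⋃ i, {z : EuclideanSpace ℝ (Fin n) | ∀ j, z j ∈ Set.Icc (c i j) (c i j + δ)}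

lemma exists_fin_cover {ι : Type*} [Fintype ι] {n : ℕ} {δ : ℝ}
    {S : Set (EuclideanSpace ℝ (Fin n))} (c : ι → Fin n → ℝ) (h : S ⊆ cubes δ c) :
    Fintype.card ι ∈ {m : ℕ | ∃ c : Fin m → (Fin n → ℝ),
    S ⊆ ⋃ i, {z : EuclideanSpace ℝ (Fin n) | ∀ j, z j ∈ Set.Icc (c i j) (c i j + δ)}} := by
  refine ⟨fun i => c ((Fintype.equivFin ι).symm i), fun z hz => ?_⟩
  obtain ⟨i, hi⟩ := mem_iUnion.1 (h hz)
  refine mem_iUnion.2 ⟨Fintype.equivFin ι i, ?_⟩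
  simpa using hi

lemma cubeCoverNum_le_card {ι : Type*} [Fintype ι] {n : ℕ} {δ : ℝ}
    {S : Set (EuclideanSpace ℝ (Fin n))} (c : ι → Fin n → ℝ) (h : S ⊆ cubes δ c) :
    cubeCoverNum n δ S ≤ Fintype.card ι :=
  Nat.sInf_le (exists_fin_cover c h)

/-- The infimum in `cubeCoverNum` is attained as soon as some finite cover exists. -/
lemma exists_minimal_cover {ι : Type*} [Fintype ι] {n : ℕ} {δ : ℝ}
    {S : Set (EuclideanSpace ℝ (Fin n))} (c : ι → Fin n → ℝ) (h : S ⊆ cubes δ c) :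
    ∃ c' : Fin (cubeCoverNum n δ S) → Fin n → ℝ, S ⊆ cubes δ c' :=
  Nat.sInf_mem ⟨_, exists_fin_cover c h⟩

/-! ### The two sets -/

/-- The point of `ℝ^(k+1)` with base coordinates `x` and height `h`. -/
def pt {k : ℕ} (x : Fin k → ℝ) (h : ℝ) : EuclideanSpace ℝ (Fin (k + 1)) :=
  WithLp.toLp 2 (Fin.snoc (α := fun _ => ℝ) x h)

lemma Gset_subset_Fset (t : ℝ) (k : ℕ) : Gset t (k + 1) ⊆ Fset t (k + 1) := by
  rintro z ⟨x, hx, hz, hl⟩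
  by_cases h : ∃ q : ℕ, ∃ p : Fin (k + 1 - 1) → ℕ,
      (∀ i, 1 ≤ p i ∧ p i < q ∧ Nat.Coprime (p i) q) ∧ (∀ i, x i = (p i : ℝ) / (q : ℝ))
  · left
    obtain ⟨p, hp, hpx⟩ := h.choose_spec
    refine ⟨h.choose, p, fun i => ⟨(hp i).1, (hp i).2.1⟩, fun i => (hz i).trans (hpx i),
      fun j hj => ?_⟩
    rw [hl j hj, popcornFun, dif_pos h]
  · right
    refine ⟨fun i => by rw [hz i]; exact hx i, fun j hj => ?_⟩
    rw [hl j hj, popcornFun, dif_neg h]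

/-- Points with prime denominator `q` lie on the graph: `p i / q` is then in lowest terms, so the
denominator chosen in `popcornFun` must be `q`. -/
lemma pt_mem_Gset {t : ℝ} {k : ℕ} (hk : 1 ≤ k) {q : ℕ} (hq : q.Prime) {p : Fin k → ℕ}
    (hp : ∀ i, p i ∈ Finset.Ico 1 q) :
    pt (fun i => (p i : ℝ) / q) ((q : ℝ) ^ (-t)) ∈ Gset t (k + 1) := by
  have hq0 : (0 : ℝ) < q := by exact_mod_cast hq.pos
  have hcop : ∀ i, Nat.Coprime (p i) q := fun i => by
    have := Finset.mem_Ico.1 (hp i)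
    exact (Nat.coprime_of_lt_prime (by omega) this.2 hq).symm
  refine ⟨fun i => (p i : ℝ) / q, fun i => ?_, fun i => ?_, fun j hj => ?_⟩
  · have := Finset.mem_Ico.1 (hp i)
    refine ⟨by positivity, ?_⟩
    rw [div_le_one hq0]
    exact_mod_cast this.2.le
  · exact Fin.snoc_castSucc (α := fun _ => ℝ) ((q : ℝ) ^ (-t)) (fun i => (p i : ℝ) / q) i
  · have hj' : j = Fin.last k := Fin.ext (by simpa using hj)
    subst hj'
    have h : ∃ q' : ℕ, ∃ p' : Fin (k + 1 - 1) → ℕ,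
      (∀ i, 1 ≤ p' i ∧ p' i < q' ∧ Nat.Coprime (p' i) q') ∧
      (∀ i : Fin (k + 1 - 1), (p i : ℝ) / q = (p' i : ℝ) / (q' : ℝ)) :=
      ⟨q, p, fun i => ⟨(Finset.mem_Ico.1 (hp i)).1, (Finset.mem_Ico.1 (hp i)).2, hcop i⟩,
        fun i => rfl⟩
    have hch : h.choose = q := by
      obtain ⟨p', hp', hpp⟩ := h.choose_spec
      generalize h.choose = q' at *
      let i0 : Fin k := ⟨0, hk⟩
      obtain ⟨h1, h2, h3⟩ := hp' i0
      have h4 := hpp i0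
      have hq'0 : (0 : ℝ) < q' := by exact_mod_cast (by omega : 0 < q')
      rw [div_eq_div_iff hq0.ne' hq'0.ne'] at h4
      have h5 : p i0 * q' = p' i0 * q := by exact_mod_cast h4
      apply Nat.dvd_antisymm
      · exact h3.symm.dvd_of_dvd_mul_left (Dvd.intro_left _ h5)
      · exact (hcop i0).symm.dvd_of_dvd_mul_left (Dvd.intro_left _ h5.symm)
    have : popcornFun t (k + 1) (fun i => (p i : ℝ) / q) = (q : ℝ) ^ (-t) := by
      rw [popcornFun, dif_pos h, hch]
    rw [this]
    exact Fin.snoc_last (α := fun _ => ℝ) ((q : ℝ) ^ (-t)) (fun i => (p i : ℝ) / q)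

/-! ### Upper bound -/

lemma rpow_succ_add {X t : ℝ} {k : ℕ} (hX : 0 < X) :
    X ^ (k + 1 + t : ℝ) = X ^ (k + 1) * X ^ t := by
  rw [Real.rpow_add hX, ← Real.rpow_natCast]
  push_cast
  rfl

lemma real_mem_cell {δ x B : ℝ} (hδ : 0 < δ) (h0 : 0 ≤ x) (h1 : x ≤ B) :
    ∃ i : Fin (⌊B / δ⌋₊ + 1), (i : ℝ) * δ ≤ x ∧ x ≤ i * δ + δ := by
  refine ⟨⟨⌊x / δ⌋₊, Nat.lt_succ_of_le (Nat.floor_mono (by gcongr))⟩, ?_, ?_⟩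
  · exact (le_div_iff₀ hδ).1 (Nat.floor_le (by positivity))
  · have := (div_le_iff₀ hδ).1 (Nat.lt_floor_add_one (x / δ)).le
    simpa [add_mul] using this

/-- The cover of `Fset` behind the upper bound: denominators `q ≤ X` get one cube per point, and
everything else lies below height `X ^ (-t)`, in a slab that is cut into a grid of cubes. -/
lemma exists_cover_Fset {t δ X : ℝ} {k : ℕ} (ht : 0 < t) (hδ : 0 < δ) (hδ1 : δ ≤ 1)
    (hX : 1 ≤ X) (hXδ : X ^ (k + 1 + t : ℝ) * δ ^ (k + 1) = 1) (hδX : δ ≤ X ^ (-t)) :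
    ∃ (ι : Type) (_ : Fintype ι) (c : ι → Fin (k + 1) → ℝ),
      Fset t (k + 1) ⊆ cubes δ c ∧ (Fintype.card ι : ℝ) ≤ 2 * 2 ^ (k + 1) * X ^ (k + 1) := by
  have hX0 : 0 < X := by linarith
  let Q := ⌊X⌋₊
  let n := ⌊1 / δ⌋₊
  let l := ⌊X ^ (-t) / δ⌋₊
  refine ⟨(Fin (Q + 1) × (Fin k → Fin (Q + 1))) ⊕ ((Fin k → Fin (n + 1)) × Fin (l + 1)),
    inferInstance, Sum.elim
      (fun a => Fin.snoc (α := fun _ => ℝ) (fun i => ((a.2 i : ℕ) : ℝ) / ((a.1 : ℕ) : ℝ))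
        (((a.1 : ℕ) : ℝ) ^ (-t)))
      (fun a => Fin.snoc (α := fun _ => ℝ) (fun i => ((a.1 i : ℕ) : ℝ) * δ)
        (((a.2 : ℕ) : ℝ) * δ)), ?_, ?_⟩
  · have slab : ∀ z : EuclideanSpace ℝ (Fin (k + 1)),
        (∀ i : Fin k, 0 ≤ z i.castSucc ∧ z i.castSucc ≤ 1) → 0 ≤ z (Fin.last k) →
        z (Fin.last k) ≤ X ^ (-t) → ∃ a : (Fin k → Fin (n + 1)) × Fin (l + 1),
          ∀ j, z j ∈ Set.Icc
            (Fin.snoc (α := fun _ => ℝ) (fun i => ((a.1 i : ℕ) : ℝ) * δ)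
              (((a.2 : ℕ) : ℝ) * δ) j)
            (Fin.snoc (α := fun _ => ℝ) (fun i => ((a.1 i : ℕ) : ℝ) * δ)
              (((a.2 : ℕ) : ℝ) * δ) j + δ) := by
      intro z h1 h2 h3
      choose f hf using fun i => real_mem_cell hδ (h1 i).1 (h1 i).2
      obtain ⟨g, hg⟩ := real_mem_cell hδ h2 h3
      refine ⟨(f, g), fun j => ?_⟩
      refine Fin.lastCases ?_ (fun i => ?_) j
      · simpa using hg
      · simpa using hf i
    rintro z (⟨q, p, hp, hz, hl⟩ | ⟨hz, hl⟩)
    · replace hl := hl (Fin.last k) (by simp)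
      replace hz : ∀ i : Fin k, z i.castSucc = (p i : ℝ) / q := hz
      by_cases hq : q ≤ Q
      · refine mem_iUnion.2 ⟨Sum.inl (⟨q, by omega⟩, fun i => ⟨p i, ?_⟩), fun j => ?_⟩
        · have := hp i
          omega
        · refine Fin.lastCases ?_ (fun i => ?_) j
          · simp [hl, hδ.le]
          · simp [hz, hδ.le]
      · have hqX : X < q := Nat.lt_of_floor_lt (not_le.1 hq)
        have hq0 : (0 : ℝ) < q := by linarith
        have h1 : ∀ i : Fin k, 0 ≤ z i.castSucc ∧ z i.castSucc ≤ 1 := fun i =>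
          hz i ▸ ⟨by positivity, (div_le_one hq0).2 (by exact_mod_cast (hp i).2.le)⟩
        have h2 : z (Fin.last k) ≤ X ^ (-t) := by
          rw [hl]
          exact Real.rpow_le_rpow_of_nonpos hX0 hqX.le (by linarith)
        obtain ⟨a, ha⟩ := slab z h1 (by rw [hl]; positivity) h2
        exact mem_iUnion.2 ⟨Sum.inr a, ha⟩
    · obtain ⟨a, ha⟩ := slab z (fun i => hz i) (hl (Fin.last k) (by simp)).ge
        (by rw [hl (Fin.last k) (by simp)]; positivity)
      exact mem_iUnion.2 ⟨Sum.inr a, ha⟩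
  · have hQ : ((Q : ℝ) + 1) ≤ 2 * X := by
      have := Nat.floor_le hX0.le
      linarith
    have hn : ((n : ℝ) + 1) ≤ 2 / δ := by
      have := Nat.floor_le (a := 1 / δ) (by positivity)
      have h1 : 1 ≤ 1 / δ := by rwa [le_div_iff₀ hδ, one_mul]
      calc (n : ℝ) + 1 ≤ 1 / δ + 1 / δ := by linarith
        _ = 2 / δ := by ring
    have hl : ((l : ℝ) + 1) ≤ 2 * X ^ (-t) / δ := by
      have := Nat.floor_le (a := X ^ (-t) / δ) (by positivity)
      have h1 : 1 ≤ X ^ (-t) / δ := by rwa [le_div_iff₀ hδ, one_mul]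
      calc (l : ℝ) + 1 ≤ X ^ (-t) / δ + X ^ (-t) / δ := by linarith
        _ = 2 * X ^ (-t) / δ := by ring
    have e : (2 / δ) ^ k * (2 * X ^ (-t) / δ) = 2 ^ (k + 1) * X ^ (k + 1) := by
      rw [rpow_succ_add hX0] at hXδ
      have h3 : X ^ t ≠ 0 := by positivity
      rw [Real.rpow_neg hX0.le, div_pow]
      field_simp
      linear_combination -(2 : ℝ) ^ (k + 1) * hXδ
    simp only [Fintype.card_sum, Fintype.card_prod, Fintype.card_fun, Fintype.card_fin]
    push_cast
    calc ((Q : ℝ) + 1) * ((Q : ℝ) + 1) ^ k + ((n : ℝ) + 1) ^ k * ((l : ℝ) + 1)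
        ≤ (2 * X) * (2 * X) ^ k + (2 / δ) ^ k * (2 * X ^ (-t) / δ) := by gcongr
      _ = 2 * 2 ^ (k + 1) * X ^ (k + 1) := by rw [e]; ring

/-! ### Counting tools -/

/-- Cauchy–Schwarz for collisions: a map from `A` to a `β` collides at least `#A ^ 2 / #β` times. -/
lemma card_sq_le_collisions {α β : Type*} [DecidableEq β] [Fintype β]
    (A : Finset α) (f : α → β) :
    A.card ^ 2 ≤ Fintype.card β * ((A ×ˢ A).filter fun x => f x.1 = f x.2).card := by
  have h1 : A.card = ∑ b : β, (A.filter fun a => f a = b).card :=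
    Finset.card_eq_sum_card_fiberwise fun _ _ => Finset.mem_coe.2 (Finset.mem_univ _)
  have h2 : ((A ×ˢ A).filter fun x => f x.1 = f x.2).card
      = ∑ b : β, (A.filter fun a => f a = b).card ^ 2 := by
    rw [Finset.card_eq_sum_card_fiberwise (f := fun x => f x.1) (t := Finset.univ)
      fun _ _ => Finset.mem_coe.2 (Finset.mem_univ _)]
    refine Finset.sum_congr rfl fun b _ => ?_
    rw [sq, ← Finset.card_product]
    congr 1
    ext ⟨x, y⟩
    simp only [Finset.mem_filter, Finset.mem_product]
    constructor
    · rintro ⟨⟨⟨hx, hy⟩, hxy⟩, hb⟩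
      exact ⟨⟨hx, hb⟩, hy, hxy ▸ hb⟩
    · rintro ⟨⟨hx, hb⟩, hy, hb'⟩
      exact ⟨⟨⟨hx, hy⟩, hb.trans hb'.symm⟩, hb⟩
  rw [h2, h1, ← Finset.card_univ]
  exact sq_sum_le_card_mul_sum_sq

/-- The nonzero integers of absolute value at most `B` (empty for `B < 0`). -/
noncomputable def nzInt (B : ℝ) : Finset ℤ := (Finset.Icc (-(⌊B⌋₊ : ℤ)) ⌊B⌋₊).erase 0

lemma card_nzInt_le {B : ℝ} (hB : 0 ≤ B) : ((nzInt B).card : ℝ) ≤ 2 * B := by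
  have : (nzInt B).card = 2 * ⌊B⌋₊ := by
    rw [nzInt, Finset.card_erase_of_mem (by simp), Int.card_Icc]
    omega
  rw [this]
  push_cast
  linarith [Nat.floor_le hB]

lemma mem_nzInt {B : ℝ} {m : ℤ} (hm : m ≠ 0) (h : |(m : ℝ)| ≤ B) : m ∈ nzInt B := by
  have h2 : m.natAbs ≤ ⌊B⌋₊ := Nat.le_floor (by rwa [Nat.cast_natAbs, Int.cast_abs])
  simp only [nzInt, Finset.mem_erase, Finset.mem_Icc]
  refine ⟨hm, ?_, ?_⟩ <;> omega

/-- The mean value inequality for `x ↦ x ^ (-t)`, from `log y ≤ y - 1` and `y + 1 ≤ exp y`. -/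
lemma sub_le_of_rpow_sub_le {t δ X a b : ℝ} (ht : 0 < t) (ha : 0 < a) (hab : a ≤ b)
    (hb : b ≤ X) (h : a ^ (-t) - b ^ (-t) ≤ δ) : b - a ≤ δ * X ^ (t + 1) / t := by
  have hb0 : 0 < b := ha.trans_le hab
  have h1 : 1 + t * (1 - a / b) ≤ (a / b) ^ (-t) := by
    rw [Real.rpow_def_of_pos (by positivity)]
    have h2 := Real.log_le_sub_one_of_pos (x := a / b) (by positivity)
    have h3 := Real.add_one_le_exp (Real.log (a / b) * -t)
    nlinarith
  have h4 : (a / b) ^ (-t) = a ^ (-t) / b ^ (-t) := Real.div_rpow ha.le hb0.le _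
  have hbt : 0 < b ^ (-t) := by positivity
  rw [h4, le_div_iff₀ hbt] at h1
  have h5 : t * (1 - a / b) * b ^ (-t) ≤ δ := by linarith
  have h6 : b ^ (t + 1) * b ^ (-t) = b := by
    rw [← Real.rpow_add hb0]; simp
  have hδ : 0 ≤ δ := by
    refine le_trans ?_ h5
    have : a / b ≤ 1 := (div_le_one hb0).2 hab
    have : 0 ≤ 1 - a / b := by linarith
    positivity
  have h7 : b - a ≤ δ * b ^ (t + 1) / t := by
    rw [le_div_iff₀ ht]
    calc (b - a) * t = t * (1 - a / b) * b := by field_simp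
      _ = t * (1 - a / b) * b ^ (-t) * b ^ (t + 1) := by
        rw [mul_assoc _ (b ^ (-t)), mul_comm (b ^ (-t)), h6]
      _ ≤ δ * b ^ (t + 1) := by gcongr
  refine h7.trans ?_
  gcongr

lemma abs_sub_le_of_rpow {t δ X a b : ℝ} (ht : 0 < t) (ha : 0 < a) (hb : 0 < b)
    (haX : a ≤ X) (hbX : b ≤ X) (h : |a ^ (-t) - b ^ (-t)| ≤ δ) :
    |a - b| ≤ δ * X ^ (t + 1) / t := by
  have h' := abs_le.1 h
  rcases le_total a b with hab | hab
  · rw [abs_sub_comm, abs_of_nonneg (by linarith)]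
    exact sub_le_of_rpow_sub_le ht ha hab hbX (by linarith)
  · rw [abs_of_nonneg (by linarith)]
    exact sub_le_of_rpow_sub_le ht hb hab haX (by linarith)

/-! ### Pairs of close fractions -/

/-- Numerator vectors of denominator `q`: all entries lie in `{1, …, q - 1}`. -/
def nums (k q : ℕ) : Finset (Fin k → ℕ) := Fintype.piFinset fun _ => Finset.Ico 1 q

lemma card_nums (k q : ℕ) : (nums k q).card = (q - 1) ^ k := by
  simp [nums]

/-- Quasi-independence: for distinct primes `q, q'` the nonzero integer `p i * q' - p' i * q`
determines `(p i, p' i)`, and it is at most `δ q q'` in absolute value when the two fractions are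
`δ`-close. -/
lemma card_close_le {δ X : ℝ} {k q q' : ℕ} (hq : q.Prime) (hq' : q'.Prime) (hne : q ≠ q')
    (hδ : 0 ≤ δ) (hqX : (q : ℝ) ≤ X) (hqX' : (q' : ℝ) ≤ X) (P : Finset ((Fin k → ℕ) × (Fin k → ℕ)))
    (hP : ∀ x ∈ P, x.1 ∈ nums k q ∧ x.2 ∈ nums k q' ∧
      ∀ i, |(x.1 i : ℝ) / q - (x.2 i : ℝ) / q'| ≤ δ) :
    (P.card : ℝ) ≤ (2 * (δ * X ^ 2)) ^ k := by
  have hcop : IsCoprime (q : ℤ) (q' : ℤ) :=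
    Nat.isCoprime_iff_coprime.2 ((Nat.coprime_primes hq hq').2 hne)
  have hq0 : (0 : ℝ) < q := by exact_mod_cast hq.pos
  have hq0' : (0 : ℝ) < q' := by exact_mod_cast hq'.pos
  have hX0 : 0 ≤ X := hq0.le.trans hqX
  have hmem : ∀ x ∈ P, ∀ i, (1 ≤ x.1 i ∧ x.1 i < q) ∧ (1 ≤ x.2 i ∧ x.2 i < q') := by
    intro x hx i
    have h := hP x hx
    simp only [nums, Fintype.mem_piFinset, Finset.mem_Ico] at h
    exact ⟨h.1 i, h.2.1 i⟩
  have key : ∀ a b : ℤ, |a| < q → a * q' = b * q → a = 0 := fun a b ha hab =>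
    Int.eq_zero_of_abs_lt_dvd (hcop.dvd_of_dvd_mul_right (Dvd.intro_left _ hab.symm)) ha
  have hcard : P.card ≤ (Fintype.piFinset fun _ : Fin k => nzInt (δ * X ^ 2)).card := by
    refine Finset.card_le_card_of_injOn
      (fun x i => (x.1 i : ℤ) * q' - (x.2 i : ℤ) * q) (fun x hx => ?_) (fun x hx y hy hxy => ?_)
    · refine Finset.mem_coe.2 (Fintype.mem_piFinset.2 fun i => ?_)
      have hx' := hmem x hx i
      refine mem_nzInt (fun h0 => ?_) ?_
      · have := key (x.1 i) (x.2 i) (by rw [abs_of_nonneg (by positivity)]; exact_mod_cast hx'.1.2)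
          (by linarith)
        omega
      · have h1 := (hP x hx).2.2 i
        have h2 : (((x.1 i : ℤ) * q' - (x.2 i : ℤ) * q : ℤ) : ℝ)
            = ((x.1 i : ℝ) / q - (x.2 i : ℝ) / q') * (q * q') := by
          push_cast
          field_simp
        rw [h2, abs_mul, abs_of_pos (by positivity : (0 : ℝ) < q * q'), sq]
        gcongr
    · have hi : ∀ i, x.1 i = y.1 i ∧ x.2 i = y.2 i := by
        intro i
        have h1 : (x.1 i : ℤ) * q' - (x.2 i : ℤ) * q = (y.1 i : ℤ) * q' - (y.2 i : ℤ) * q :=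
          congrFun hxy i
        have hx' := hmem x hx i
        have hy' := hmem y hy i
        have h2 := key ((x.1 i : ℤ) - y.1 i) ((x.2 i : ℤ) - y.2 i)
          (by rw [abs_lt]; constructor <;> omega) (by linarith)
        have h3 : ((x.2 i : ℤ) - y.2 i) * q = 0 := by
          linear_combination -h1 + h2 * (q' : ℤ)
        have h4 := (mul_eq_zero.1 h3).resolve_right (by exact_mod_cast hq.ne_zero)
        omega
      exact Prod.ext (funext fun i => (hi i).1) (funext fun i => (hi i).2)
  rw [Fintype.card_piFinset_const] at hcard
  calc (P.card : ℝ) ≤ (((nzInt (δ * X ^ 2)).card ^ k : ℕ) : ℝ) := by exact_mod_cast hcard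
    _ = ((nzInt (δ * X ^ 2)).card : ℝ) ^ k := by push_cast; rfl
    _ ≤ _ := by
      gcongr
      exact card_nzInt_le (by positivity)

/-- Two fractions with the same denominator `q < 1 / δ` that are `δ`-close are equal. -/
lemma card_close_self_le {δ X : ℝ} {k q : ℕ} (hδq : δ * q < 1) (hq : 0 < q)
    (hqX : (q : ℝ) ≤ X) (P : Finset ((Fin k → ℕ) × (Fin k → ℕ)))
    (hP : ∀ x ∈ P, x.1 ∈ nums k q ∧ ∀ i, |(x.1 i : ℝ) / q - (x.2 i : ℝ) / q| ≤ δ) :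
    (P.card : ℝ) ≤ X ^ k := by
  have hq0 : (0 : ℝ) < q := by exact_mod_cast hq
  have heq : ∀ x ∈ P, x.1 = x.2 := by
    intro x hx
    funext i
    have h := (hP x hx).2 i
    rw [← sub_div, abs_div, abs_of_pos hq0, div_le_iff₀ hq0] at h
    have h1 : |((x.1 i : ℤ) - (x.2 i : ℤ) : ℤ)| < 1 := by
      have : |(x.1 i : ℝ) - x.2 i| < 1 := h.trans_lt hδq
      exact_mod_cast this
    have := Int.abs_lt_one_iff.1 h1
    omega
  have hcard : P.card ≤ (nums k q).card := by
    refine Finset.card_le_card_of_injOn Prod.fst (fun x hx => (hP x hx).1)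
      (fun x hx y hy hxy => ?_)
    exact Prod.ext hxy (by rw [← heq x hx, ← heq y hy]; exact hxy)
  calc (P.card : ℝ) ≤ ((nums k q).card : ℝ) := by exact_mod_cast hcard
    _ = ((q - 1 : ℕ) : ℝ) ^ k := by rw [card_nums]; push_cast; rfl
    _ ≤ X ^ k := by
      gcongr
      exact le_trans (by exact_mod_cast Nat.sub_le q 1) hqX

/-! ### Lower bound -/

/-- Second moment estimate. If `m` cubes of side `δ` cover the graph and `S` is a set of primes
up to `X`, then the points with denominators in `S` collide at most `O(X ^ (k + 1))` times, so
Cauchy–Schwarz bounds their number in terms of `m`. -/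
lemma sq_sum_le_of_cover {t δ X : ℝ} {k m : ℕ} (hk : 1 ≤ k) (ht : 0 < t) (hδ : 0 < δ)
    (hX : 1 ≤ X) (hXδ : X ^ (k + 1 + t : ℝ) * δ ^ (k + 1) = 1) (hδX : δ * X < 1)
    (c : Fin m → Fin (k + 1) → ℝ) (hc : Gset t (k + 1) ⊆ cubes δ c)
    (S : Finset ℕ) (hS : ∀ q ∈ S, q.Prime ∧ (q : ℝ) ≤ X) :
    ((∑ q ∈ S, (q - 1) ^ k : ℕ) : ℝ) ^ 2 ≤ m * ((1 + 2 ^ (k + 1) / t) * X ^ (k + 1)) := by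
  classical
  have hX0 : 0 < X := by linarith
  -- Pairs `⟨q, p⟩` of a denominator and a numerator vector.
  let A : Finset (Σ _ : ℕ, Fin k → ℕ) := S.sigma fun q => nums k q
  have hAcard : A.card = ∑ q ∈ S, (q - 1) ^ k := by
    simp [A, Finset.card_sigma, card_nums]
  let P : (Σ _ : ℕ, Fin k → ℕ) → EuclideanSpace ℝ (Fin (k + 1)) :=
    fun a => pt (fun i => (a.2 i : ℝ) / a.1) ((a.1 : ℝ) ^ (-t))
  have hcov : ∀ a ∈ A, ∃ i, ∀ j, P a j ∈ Set.Icc (c i j) (c i j + δ) := by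
    rintro ⟨q, p⟩ ha
    have ha' := Finset.mem_sigma.1 ha
    exact mem_iUnion.1 (hc (pt_mem_Gset hk (hS q ha'.1).1 (Fintype.mem_piFinset.1 ha'.2)))
  rcases A.eq_empty_or_nonempty with hA | ⟨a0, ha0⟩
  · rw [← hAcard, hA]
    simp only [Finset.card_empty]
    norm_num
    positivity
  obtain ⟨i0, -⟩ := hcov a0 ha0
  let f : (Σ _ : ℕ, Fin k → ℕ) → Fin m := fun a =>
    if h : ∃ i, ∀ j, P a j ∈ Set.Icc (c i j) (c i j + δ) then h.choose else i0
  have hf : ∀ a ∈ A, ∀ j, P a j ∈ Set.Icc (c (f a) j) (c (f a) j + δ) := by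
    intro a ha
    have h := hcov a ha
    have : f a = h.choose := dif_pos h
    rw [this]
    exact h.choose_spec
  let R := (A ×ˢ A).filter fun x => f x.1 = f x.2
  have hR : ∀ x ∈ R, (x.1.1 ∈ S ∧ x.1.2 ∈ nums k x.1.1) ∧ (x.2.1 ∈ S ∧ x.2.2 ∈ nums k x.2.1) ∧
      (∀ i, |(x.1.2 i : ℝ) / x.1.1 - (x.2.2 i : ℝ) / x.2.1| ≤ δ) ∧
      |(x.1.1 : ℝ) ^ (-t) - (x.2.1 : ℝ) ^ (-t)| ≤ δ := by
    rintro ⟨a, b⟩ hx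
    simp only [R, Finset.mem_filter, Finset.mem_product] at hx
    obtain ⟨⟨ha, hb⟩, hab⟩ := hx
    have hclose : ∀ j, |P a j - P b j| ≤ δ := by
      intro j
      have h1 := hf a ha j
      have h2 := hf b hb j
      rw [hab] at h1
      rw [abs_le]
      constructor <;> linarith [h1.1, h1.2, h2.1, h2.2]
    refine ⟨Finset.mem_sigma.1 ha, Finset.mem_sigma.1 hb, fun i => ?_, ?_⟩
    · simpa [P, pt] using hclose i.castSucc
    · simpa [P, pt] using hclose (Fin.last k)
  have hCS : A.card ^ 2 ≤ m * R.card := by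
    simpa using card_sq_le_collisions A f
  -- The collisions with denominators `q` and `q'`.
  let E : ℕ → ℕ → Finset ((Fin k → ℕ) × (Fin k → ℕ)) := fun q q' =>
    ((nums k q) ×ˢ (nums k q')).filter fun y => ∀ i, |(y.1 i : ℝ) / q - (y.2 i : ℝ) / q'| ≤ δ
  let near : ℕ → Finset ℕ := fun q =>
    S.filter fun q' => q' ≠ q ∧ |(q : ℝ) - q'| ≤ δ * X ^ (t + 1) / t
  have hnear : ∀ q, ((near q).card : ℝ) ≤ 2 * (δ * X ^ (t + 1) / t) := by
    intro q
    have : (near q).card ≤ (nzInt (δ * X ^ (t + 1) / t)).card := by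
      refine Finset.card_le_card_of_injOn (fun q' => (q : ℤ) - q') (fun q' hq' => ?_)
        (fun x _ y _ hxy => ?_)
      · have h := Finset.mem_filter.1 hq'
        refine mem_nzInt (fun h0 => h.2.1 (by exact_mod_cast (sub_eq_zero.1 h0).symm)) ?_
        simpa using h.2.2
      · have : (q : ℤ) - x = q - y := hxy
        omega
    exact le_trans (by exact_mod_cast this) (card_nzInt_le (by positivity))
  have hRcard : R.card ≤ ∑ q ∈ S, ((E q q).card + ∑ q' ∈ near q, (E q q').card) := by
    have : R.card ≤ (S.sigma fun q => (insert q (near q)).sigma fun q' => E q q').card := by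
      refine Finset.card_le_card_of_injOn
        (fun x => ⟨x.1.1, x.2.1, x.1.2, x.2.2⟩) (fun x hx => ?_) ?_
      · obtain ⟨h1, h2, h3, h4⟩ := hR x hx
        simp only [Finset.coe_sigma, Set.mem_sigma_iff, Finset.mem_coe, Finset.mem_insert]
        refine ⟨h1.1, ?_, Finset.mem_filter.2 ⟨Finset.mem_product.2 ⟨h1.2, h2.2⟩, h3⟩⟩
        by_cases hq : x.2.1 = x.1.1
        · exact Or.inl hq
        · refine Or.inr (Finset.mem_filter.2 ⟨h2.1, hq, ?_⟩)
          exact abs_sub_le_of_rpow ht (by exact_mod_cast (hS _ h1.1).1.pos)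
            (by exact_mod_cast (hS _ h2.1).1.pos) (hS _ h1.1).2 (hS _ h2.1).2 h4
      · rintro ⟨⟨q, p⟩, ⟨q', p'⟩⟩ _ ⟨⟨r, s⟩, ⟨r', s'⟩⟩ _ h
        cases h
        rfl
    rw [Finset.card_sigma] at this
    refine this.trans_eq (Finset.sum_congr rfl fun q _ => ?_)
    rw [Finset.card_sigma, Finset.sum_insert (by simp [near])]
  have hE : ∀ q ∈ S, (((E q q).card + ∑ q' ∈ near q, (E q q').card : ℕ) : ℝ)
      ≤ X ^ k + 2 * (δ * X ^ (t + 1) / t) * (2 * (δ * X ^ 2)) ^ k := by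
    intro q hq
    push_cast
    refine add_le_add ?_ ?_
    · refine card_close_self_le (δ := δ) (q := q) ?_ (hS q hq).1.pos (hS q hq).2 _ ?_
      · exact lt_of_le_of_lt (by gcongr; exact (hS q hq).2) hδX
      · intro x hx
        have h := Finset.mem_filter.1 hx
        exact ⟨(Finset.mem_product.1 h.1).1, h.2⟩
    · calc ∑ q' ∈ near q, ((E q q').card : ℝ)
          ≤ ∑ q' ∈ near q, (2 * (δ * X ^ 2)) ^ k := by
            refine Finset.sum_le_sum fun q' hq' => ?_
            have h := Finset.mem_filter.1 hq'
            refine card_close_le (hS q hq).1 (hS q' h.1).1 h.2.1.symm hδ.le (hS q hq).2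
              (hS q' h.1).2 _ fun x hx => ?_
            have h := Finset.mem_filter.1 hx
            exact ⟨(Finset.mem_product.1 h.1).1, (Finset.mem_product.1 h.1).2, h.2⟩
        _ = (near q).card * (2 * (δ * X ^ 2)) ^ k := by rw [Finset.sum_const, nsmul_eq_mul]
        _ ≤ _ := by gcongr; exact hnear q
  have hScard : (S.card : ℝ) ≤ X := by
    have : S.card ≤ (Finset.Icc 1 ⌊X⌋₊).card := Finset.card_le_card fun q hq =>
      Finset.mem_Icc.2 ⟨(hS q hq).1.one_le, Nat.le_floor (hS q hq).2⟩
    rw [Nat.card_Icc, Nat.add_sub_cancel] at this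
    exact le_trans (by exact_mod_cast this) (Nat.floor_le hX0.le)
  have hRreal : (R.card : ℝ) ≤ (1 + 2 ^ (k + 1) / t) * X ^ (k + 1) := by
    calc (R.card : ℝ) ≤ ((∑ q ∈ S, ((E q q).card + ∑ q' ∈ near q, (E q q').card) : ℕ) : ℝ) := by
          exact_mod_cast hRcard
      _ = ∑ q ∈ S, (((E q q).card + ∑ q' ∈ near q, (E q q').card : ℕ) : ℝ) := by push_cast; rfl
      _ ≤ ∑ q ∈ S, (X ^ k + 2 * (δ * X ^ (t + 1) / t) * (2 * (δ * X ^ 2)) ^ k) :=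
          Finset.sum_le_sum hE
      _ = S.card * (X ^ k + 2 * (δ * X ^ (t + 1) / t) * (2 * (δ * X ^ 2)) ^ k) := by
          rw [Finset.sum_const, nsmul_eq_mul]
      _ ≤ X * (X ^ k + 2 * (δ * X ^ (t + 1) / t) * (2 * (δ * X ^ 2)) ^ k) := by gcongr
      _ = (1 + 2 ^ (k + 1) / t) * X ^ (k + 1) := by
          rw [rpow_succ_add hX0] at hXδ
          rw [Real.rpow_add hX0, Real.rpow_one, mul_pow, mul_pow, ← pow_mul, mul_comm 2 k, pow_mul]
          field_simp
          linear_combination X ^ k * (2 : ℝ) ^ (k + 1) * X * hXδ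
  rw [← hAcard]
  calc (A.card : ℝ) ^ 2 ≤ m * R.card := by exact_mod_cast hCS
    _ ≤ _ := by gcongr

/-- The set `S` consists of the primes between `π(n) / 2` and `n`: there are at least `π(n) / 2` of
them, and each contributes at least `(π(n) / 2 - 1) ^ k`. -/
lemma exists_primes (n k : ℕ) (hn : 6 ≤ n.primeCounting) :
    ∃ S : Finset ℕ, (∀ q ∈ S, q.Prime ∧ q ≤ n) ∧
      ((n.primeCounting : ℝ) / 4) ^ (k + 1) ≤ ((∑ q ∈ S, (q - 1) ^ k : ℕ) : ℝ) := by
  let M := n.primeCounting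
  let S := (Nat.primesLE n).filter fun q => M / 2 ≤ q
  refine ⟨S, fun q hq => ?_, ?_⟩
  · have h := (Finset.mem_filter.1 hq).1
    exact ⟨Nat.prime_of_mem_primesLE h, Nat.le_of_mem_primesLE h⟩
  · have h1 : M ≤ S.card + M / 2 := by
      have h2 : (Nat.primesLE n).card = M := Nat.primesLE_card_eq_primeCounting n
      have h3 := Finset.card_filter_add_card_filter_not (s := Nat.primesLE n)
        (fun q => M / 2 ≤ q)
      refine (h2.symm.trans h3.symm).trans_le ?_
      refine Nat.add_le_add_left ?_ _
      calc _ ≤ (Finset.range (M / 2)).card := Finset.card_le_card fun q hq => by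
            have := (Finset.mem_filter.1 hq).2
            exact Finset.mem_range.2 (by omega)
        _ = M / 2 := Finset.card_range _
    have hM : 6 ≤ M := hn
    have h3 : (M / 2 - 1) ^ (k + 1) ≤ ∑ q ∈ S, (q - 1) ^ k := by
      calc (M / 2 - 1) ^ (k + 1) = (M / 2 - 1) * (M / 2 - 1) ^ k := pow_succ' _ _
        _ ≤ S.card * (M / 2 - 1) ^ k := by gcongr; omega
        _ = ∑ q ∈ S, (M / 2 - 1) ^ k := by rw [Finset.sum_const, smul_eq_mul]
        _ ≤ _ := Finset.sum_le_sum fun q hq => by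
            have := (Finset.mem_filter.1 hq).2
            gcongr
    have h4 : (M : ℝ) / 4 ≤ ((M / 2 - 1 : ℕ) : ℝ) := by
      rw [div_le_iff₀ (by norm_num)]
      exact_mod_cast (by omega : M ≤ (M / 2 - 1) * 4)
    calc ((M : ℝ) / 4) ^ (k + 1) ≤ ((M / 2 - 1 : ℕ) : ℝ) ^ (k + 1) := by gcongr
      _ ≤ _ := by exact_mod_cast h3

/-- A weak form of Chebyshev's lower bound. -/
lemma eventually_primeCounting_ge :
    ∀ᶠ X : ℝ in atTop, X / (4 * Real.log X) ≤ ((⌊X⌋₊).primeCounting : ℝ) := by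
  have h1 := Real.isLittleO_log_id_atTop.bound (show (0 : ℝ) < 1 / 100 by norm_num)
  filter_upwards [h1, eventually_ge_atTop 10] with X hX h10
  have hlog : 0 < Real.log X := Real.log_pos (by linarith)
  refine le_trans ?_ (Chebyshev.pi_ge' (x := X) (by linarith))
  rw [Real.norm_of_nonneg hlog.le, Real.norm_of_nonneg (by simp; linarith)] at hX
  simp only [id] at hX
  have h2 : Real.log (X + 2) ≤ Real.log X + 2 / X := by
    have : X + 2 = X * (1 + 2 / X) := by field_simp
    rw [this, Real.log_mul (by positivity) (by positivity)]
    linarith [Real.log_le_sub_one_of_pos (x := 1 + 2 / X) (by positivity)]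
  have h3 : 2 / X ≤ 1 / 5 := by rw [div_le_div_iff₀ (by linarith) (by norm_num)]; linarith
  have h4 := Real.log_two_gt_d9
  rw [div_le_div_iff₀ (by positivity) hlog]
  have h5 : X / 4 ≤ (X - 1) * Real.log 2 - Real.log (X + 2) := by nlinarith
  nlinarith

/-- Lower bound for covers of the graph, at the scale `δ ^ (k + 1) = X ^ (-(k + 1 + t))`. -/
lemma cover_lower {t δ X : ℝ} {k m : ℕ} (hk : 1 ≤ k) (ht : 0 < t) (hδ : 0 < δ)
    (hX : 1 ≤ X) (hXδ : X ^ (k + 1 + t : ℝ) * δ ^ (k + 1) = 1) (hδX : δ * X < 1)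
    (hpi : X / (4 * Real.log X) ≤ ((⌊X⌋₊).primeCounting : ℝ)) (hpi6 : 6 ≤ (⌊X⌋₊).primeCounting)
    (c : Fin m → Fin (k + 1) → ℝ) (hc : Gset t (k + 1) ⊆ cubes δ c) (hX1 : 1 < X) :
    0 < m ∧ (k + 1) * Real.log X - 2 * (k + 1) * Real.log (16 * Real.log X)
      - Real.log (1 + 2 ^ (k + 1) / t) ≤ Real.log m := by
  obtain ⟨S, hS, hsum⟩ := exists_primes ⌊X⌋₊ k hpi6
  have h := sq_sum_le_of_cover hk ht hδ hX hXδ hδX c hc S fun q hq =>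
    ⟨(hS q hq).1, (Nat.le_floor_iff (by linarith)).1 (hS q hq).2⟩
  have hX0 : 0 < X := by linarith
  have hlog : 0 < Real.log X := Real.log_pos hX1
  have h1 : (X / (16 * Real.log X)) ^ (k + 1) ≤ ((∑ q ∈ S, (q - 1) ^ k : ℕ) : ℝ) := by
    refine le_trans ?_ hsum
    refine pow_le_pow_left₀ (by positivity) ?_ _
    calc X / (16 * Real.log X) = X / (4 * Real.log X) / 4 := by field_simp; norm_num
      _ ≤ _ := by gcongr
  have h2 : ((X / (16 * Real.log X)) ^ (k + 1)) ^ 2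
      ≤ m * ((1 + 2 ^ (k + 1) / t) * X ^ (k + 1)) := le_trans (by gcongr) h
  have hC : 0 < 1 + 2 ^ (k + 1) / t := by positivity
  have hm : 0 < m := by
    rcases Nat.eq_zero_or_pos m with rfl | hm
    · have : 0 < ((X / (16 * Real.log X)) ^ (k + 1)) ^ 2 := by positivity
      rw [Nat.cast_zero, zero_mul] at h2
      linarith
    · exact hm
  refine ⟨hm, ?_⟩
  have hm' : (0 : ℝ) < m := by exact_mod_cast hm
  have h3 := Real.log_le_log (by positivity) h2
  rw [Real.log_pow, Real.log_pow, Real.log_div (by positivity) (by positivity),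
    Real.log_mul hm'.ne' (by positivity), Real.log_mul hC.ne' (by positivity),
    Real.log_pow] at h3
  push_cast at h3
  linarith

/-! ### The limit -/

/-- The bounds on `log N` at `log X = α * (-log δ)` squeeze `log N / (-log δ)`, because
`log log X` is negligible against `log X`. -/
lemma tendsto_ratio {N : ℝ → ℕ} {s α C C' : ℝ} {k : ℕ} (hα : 0 < α) (hs : (k + 1) * α = s)
    (hlow : ∀ᶠ δ in nhdsWithin (0 : ℝ) (Set.Ioi 0),
      (k + 1) * (α * -Real.log δ) - 2 * (k + 1) * Real.log (16 * (α * -Real.log δ)) - C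
        ≤ Real.log (N δ))
    (hup : ∀ᶠ δ in nhdsWithin (0 : ℝ) (Set.Ioi 0),
      Real.log (N δ) ≤ C' + (k + 1) * (α * -Real.log δ)) :
    Tendsto (fun δ : ℝ => Real.log (N δ) / (-Real.log δ)) (nhdsWithin 0 (Set.Ioi 0)) (nhds s) := by
  have hL : Tendsto (fun δ : ℝ => -Real.log δ) (nhdsWithin 0 (Set.Ioi 0)) atTop :=
    tendsto_neg_atBot_atTop.comp Real.tendsto_log_nhdsGT_zero
  have hLpos := hL.eventually (eventually_gt_atTop 0)
  have c1 : ∀ D : ℝ, Tendsto (fun L : ℝ => D / L) atTop (nhds 0) := fun D =>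
    tendsto_const_nhds.div_atTop tendsto_id
  have c2 : Tendsto (fun L : ℝ => Real.log (16 * (α * L)) / L) atTop (nhds 0) := by
    have h1 : Tendsto (fun L : ℝ => Real.log (16 * α) / L + Real.log L / L) atTop (nhds 0) := by
      simpa using (c1 (Real.log (16 * α))).add Real.isLittleO_log_id_atTop.tendsto_div_nhds_zero
    refine h1.congr' ?_
    filter_upwards [eventually_gt_atTop 0] with L hLp
    rw [← mul_assoc, Real.log_mul (by positivity) hLp.ne', add_div]
  have hlowlim : Tendsto (fun L : ℝ => s - 2 * (k + 1) * (Real.log (16 * (α * L)) / L) - C / L)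
      atTop (nhds s) := by
    simpa using (tendsto_const_nhds.sub (c2.const_mul (2 * (k + 1 : ℝ)))).sub (c1 C)
  have huplim : Tendsto (fun L : ℝ => C' / L + s) atTop (nhds s) := by
    simpa using (c1 C').add_const s
  refine tendsto_of_tendsto_of_tendsto_of_le_of_le' (hlowlim.comp hL) (huplim.comp hL) ?_ ?_
  · filter_upwards [hlow, hLpos] with δ h1 h2
    simp only [Function.comp_apply]
    rw [le_div_iff₀ h2]
    refine le_trans (le_of_eq ?_) h1
    rw [← hs]
    generalize Real.log (16 * (α * -Real.log δ)) = W
    generalize -Real.log δ = L at *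
    field_simp
  · filter_upwards [hup, hLpos] with δ h1 h2
    simp only [Function.comp_apply]
    rw [div_le_iff₀ h2]
    refine h1.trans (le_of_eq ?_)
    rw [← hs]
    generalize -Real.log δ = L at *
    field_simp

/-- for `0 < t < d/(d-1)` the box dimensions of `G_{t,d}` and `F_{t,d}` exist
and equal `d²/(d+t)`. -/
theorem box_dimension_of_popcorn_sets (d : ℕ) (hd : 2 ≤ d) (t : ℝ) (ht : 0 < t)
    (ht' : t < (d:ℝ)/((d:ℝ)-1)) :
    lowerBoxDim d (Gset t d) = (d:ℝ)^2/((d:ℝ)+t) ∧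
    upperBoxDim d (Gset t d) = (d:ℝ)^2/((d:ℝ)+t) ∧
    lowerBoxDim d (Fset t d) = (d:ℝ)^2/((d:ℝ)+t) ∧
    upperBoxDim d (Fset t d) = (d:ℝ)^2/((d:ℝ)+t) := by
  obtain ⟨k, rfl⟩ : ∃ k, d = k + 1 := ⟨d - 1, by omega⟩
  have hk : 1 ≤ k := by omega
  have hk0 : (0 : ℝ) < k := by exact_mod_cast hk
  push_cast at ht' ⊢
  have htk : t * k < k + 1 := by
    have h := ht'
    rwa [add_sub_cancel_right, lt_div_iff₀ hk0] at h
  -- The exponent `α` for which `X = δ ^ (-α)` balances the two parts of the cover.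
  obtain ⟨α, hαdef⟩ : ∃ α : ℝ, α = (k + 1) / (k + 1 + t) := ⟨_, rfl⟩
  have hα : 0 < α := by rw [hαdef]; positivity
  have hα1 : α * (k + 1 + t) = k + 1 := by rw [hαdef]; field_simp
  have hαlt : α < 1 := by rw [hαdef, div_lt_one (by positivity)]; linarith
  have hαt : α * t ≤ 1 := by
    rw [hαdef, div_mul_eq_mul_div, div_le_one (by positivity)]; linarith
  have hs : ((k : ℝ) + 1) * α = (k + 1) ^ 2 / (k + 1 + t) := by rw [hαdef]; ring
  have hL : Tendsto (fun δ : ℝ => -Real.log δ) (nhdsWithin 0 (Set.Ioi 0)) atTop :=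
    tendsto_neg_atBot_atTop.comp Real.tendsto_log_nhdsGT_zero
  have hXt : Tendsto (fun δ : ℝ => Real.exp (α * -Real.log δ)) (nhdsWithin 0 (Set.Ioi 0)) atTop :=
    Real.tendsto_exp_atTop.comp (hL.const_mul_atTop hα)
  have hpi := hXt.eventually eventually_primeCounting_ge
  have hpi6 := hXt.eventually ((Nat.tendsto_primeCounting.comp
    tendsto_nat_floor_atTop).eventually_ge_atTop 6)
  have both : ∀ᶠ δ in nhdsWithin (0 : ℝ) (Set.Ioi 0),
      ((k + 1) * (α * -Real.log δ) - 2 * (k + 1) * Real.log (16 * (α * -Real.log δ))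
        - Real.log (1 + 2 ^ (k + 1) / t) ≤ Real.log (cubeCoverNum (k + 1) δ (Gset t (k + 1)))) ∧
      Real.log (cubeCoverNum (k + 1) δ (Gset t (k + 1)))
        ≤ Real.log (cubeCoverNum (k + 1) δ (Fset t (k + 1))) ∧
      Real.log (cubeCoverNum (k + 1) δ (Fset t (k + 1)))
        ≤ Real.log (2 * 2 ^ (k + 1)) + (k + 1) * (α * -Real.log δ) := by
    filter_upwards [hpi, hpi6, hL.eventually (eventually_gt_atTop 0), self_mem_nhdsWithin]
      with δ h1 h2 h3 hδ
    have hδ0 : 0 < δ := hδ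
    have hδ1 : δ < 1 := (Real.log_neg_iff hδ0).1 (by linarith)
    have hδe : δ = Real.exp (Real.log δ) := (Real.exp_log hδ0).symm
    obtain ⟨X, hXdef⟩ : ∃ X, X = Real.exp (α * -Real.log δ) := ⟨_, rfl⟩
    have hlogX : Real.log X = α * -Real.log δ := by rw [hXdef, Real.log_exp]
    rw [← hXdef] at h1
    simp only [← hXdef, Function.comp_apply] at h2
    rw [← hlogX]
    have hX1 : 1 < X := by rw [hXdef]; exact Real.one_lt_exp_iff.2 (by positivity)
    have hX0 : 0 < X := by linarith
    have hXδ : X ^ (k + 1 + t : ℝ) * δ ^ (k + 1) = 1 := by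
      rw [Real.rpow_def_of_pos hX0, hlogX, ← Real.rpow_natCast, Real.rpow_def_of_pos hδ0,
        ← Real.exp_add, Real.exp_eq_one_iff]
      push_cast
      linear_combination -Real.log δ * hα1
    have hδX : δ * X < 1 := by
      rw [← Real.log_neg_iff (by positivity), Real.log_mul hδ0.ne' hX0.ne', hlogX]
      nlinarith
    have hδXt : δ ≤ X ^ (-t) := by
      rw [← Real.log_le_log_iff hδ0 (by positivity), Real.log_rpow hX0, hlogX]
      nlinarith
    obtain ⟨ι, hι, c, hc, hcard⟩ := exists_cover_Fset ht hδ0 hδ1.le hX1.le hXδ hδXt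
    obtain ⟨cG, hcG⟩ := exists_minimal_cover c ((Gset_subset_Fset t k).trans hc)
    obtain ⟨cF, hcF⟩ := exists_minimal_cover c hc
    obtain ⟨hmpos, hlow⟩ := cover_lower hk ht hδ0 hX1.le hXδ hδX h1 h2 cG hcG hX1
    have hGF : cubeCoverNum (k + 1) δ (Gset t (k + 1)) ≤ cubeCoverNum (k + 1) δ (Fset t (k + 1)) :=
      (cubeCoverNum_le_card cF ((Gset_subset_Fset t k).trans hcF)).trans_eq (Fintype.card_fin _)
    have hG0 : (0 : ℝ) < cubeCoverNum (k + 1) δ (Gset t (k + 1)) := by exact_mod_cast hmpos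
    have hGF' : (cubeCoverNum (k + 1) δ (Gset t (k + 1)) : ℝ)
      ≤ cubeCoverNum (k + 1) δ (Fset t (k + 1)) := by exact_mod_cast hGF
    refine ⟨hlow, Real.log_le_log hG0 hGF', ?_⟩
    have hF : (cubeCoverNum (k + 1) δ (Fset t (k + 1)) : ℝ) ≤ 2 * 2 ^ (k + 1) * X ^ (k + 1) :=
      le_trans (by exact_mod_cast cubeCoverNum_le_card c hc) hcard
    have h5 := Real.log_le_log (hG0.trans_le hGF') hF
    rw [Real.log_mul (by positivity) (by positivity), Real.log_pow] at h5
    push_cast at h5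
    exact h5
  have hG := tendsto_ratio (N := fun δ => cubeCoverNum (k + 1) δ (Gset t (k + 1))) hα hs
    (both.mono fun δ h => h.1) (both.mono fun δ h => h.2.1.trans h.2.2)
  have hF := tendsto_ratio (N := fun δ => cubeCoverNum (k + 1) δ (Fset t (k + 1))) hα hs
    (both.mono fun δ h => h.1.trans h.2.1) (both.mono fun δ h => h.2.2)
  exact ⟨hG.liminf_eq, hG.limsup_eq, hF.liminf_eq, hF.limsup_eq⟩
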